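/- Let β ∈ C_c^∞(ℝ²) and set β_q(x) := β(x−q) for q ∈ ℝ². There is a constant C > 0, depending only on φ and β, such that for every h ∈ (0,1] and every Schwartz function u : ℝ² → ℂ satisfying Pu = 0: (Σ_{q ∈ ℤ²} ‖P(β_q u)‖_{L²(ℝ²)}²)^{1/2} ≤ C h ‖u‖_{L²(ℝ²)}. -/

import Mathlib

noncomputable section

open MeasureTheory Complex

abbrev R2 : Type := EuclideanSpace ℝ (Fin 2)

/-- Partial derivative of a complex-valued function in coordinate direction `j`. -/
def pdC (j : Fin 2) (f : R2 → ℂ) (x : R2) : ℂ :=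
  fderiv ℝ f x (EuclideanSpace.single j 1)

/-- The operator `D_j = -i ∂_j` acting on complex-valued functions. -/
def Dop (j : Fin 2) (f : R2 → ℂ) (x : R2) : ℂ := -Complex.I * pdC j f x

/-- Partial derivative of a real-valued function in coordinate direction `j`. -/
def pdR (j : Fin 2) (f : R2 → ℝ) (x : R2) : ℝ :=
  fderiv ℝ f x (EuclideanSpace.single j 1)

/-- The Laplacian of a real-valued function. -/
def lapR (f : R2 → ℝ) (x : R2) : ℝ := pdR 0 (pdR 0 f) x + pdR 1 (pdR 1 f) x

/-- The rescaled potential `φ_h(x) = φ(h^{-1/2} x)`. -/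
def phih (φ : R2 → ℝ) (h : ℝ) (x : R2) : ℝ := φ ((h ^ (-(1/2 : ℝ)) : ℝ) • x)

/-- `A u = (h/2) D₁ u - (h/2) (∂₂ φ_h) u`. -/
def opAh (φ : R2 → ℝ) (h : ℝ) (u : R2 → ℂ) (x : R2) : ℂ :=
  ((h / 2 : ℝ) : ℂ) * Dop 0 u x - ((h / 2 * pdR 1 (phih φ h) x : ℝ) : ℂ) * u x

/-- `B u = (h/2) D₂ u + (h/2) (∂₁ φ_h) u`. -/
def opBh (φ : R2 → ℝ) (h : ℝ) (u : R2 → ℂ) (x : R2) : ℂ :=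
  ((h / 2 : ℝ) : ℂ) * Dop 1 u x + ((h / 2 * pdR 0 (phih φ h) x : ℝ) : ℂ) * u x

/-- `P u = A² u + B² u - (h²/4)(Δ φ_h) u - u`. -/
def opPh (φ : R2 → ℝ) (h : ℝ) (u : R2 → ℂ) (x : R2) : ℂ :=
  opAh φ h (opAh φ h u) x + opBh φ h (opBh φ h u) x
    - ((h ^ 2 / 4 * lapR (phih φ h) x : ℝ) : ℂ) * u x - u x

/-- The lattice point `(q₁, q₂) ∈ ℤ²` viewed as a point of `ℝ²`. -/
def intPt (q : ℤ × ℤ) : R2 := (EuclideanSpace.equiv (Fin 2) ℝ).symm ![(q.1 : ℝ), (q.2 : ℝ)]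

/-!
Since `Pu = 0`, the product rule leaves only commutator terms,
`P(bu) = -ih (∂₁b Au + ∂₂b Bu) - (h²/4) (Δb) u`, so it remains to bound `Au` and `Bu` in `L²` on the
support of `∇b` without losing a power of `h`. This is a Caccioppoli estimate: `A` and `B` are
symmetric, so testing `A²u + B²u = (1 + (h²/4) Δφ_h) u` against `χ²u`, with `χ = ∂_j b`, bounds
`∫ χ² (|Au|² + |Bu|²)` by the integral of `|u|²` against a weight involving only `χ` and `∇χ`;
here `h² Δφ_h = h (Δφ)(h^{-1/2} ·)` is bounded above uniformly in `h`. For `b = β_q` the weights are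
translates by `q` of a fixed compactly supported function, so their sum over the lattice is bounded.
-/

open scoped ContDiff InnerProductSpace

section CompactSupport

variable {X : Type*} [TopologicalSpace X] [MeasurableSpace X] [OpensMeasurableSpace X]
  {μ : Measure X} [IsFiniteMeasureOnCompacts μ]

lemma integrable_inner_of_hasCompactSupport_left {f g : X → ℂ} (hf : Continuous f)
    (hf_supp : HasCompactSupport f) (hg : Continuous g) :
    Integrable (fun x => ⟪f x, g x⟫_ℂ) μ :=
  (hf.inner hg).integrable_of_hasCompactSupport <|
    hf_supp.mono fun x hx hfx => hx <| by simp only [hfx, inner_zero_left]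

lemma integrable_mul_of_hasCompactSupport_left {f g : X → ℝ} (hf : Continuous f)
    (hf_supp : HasCompactSupport f) (hg : Continuous g) : Integrable (fun x => f x * g x) μ :=
  (hf.mul hg).integrable_of_hasCompactSupport hf_supp.mul_right

end CompactSupport

lemma hasCompactSupport_sq {X : Type*} [TopologicalSpace X] {f : X → ℝ}
    (hf : HasCompactSupport f) : HasCompactSupport fun x => f x ^ 2 :=
  hf.comp_left (g := (· ^ 2)) (zero_pow two_ne_zero)

lemma eLpNorm_two_sq {X F : Type*} [MeasurableSpace X] [NormedAddCommGroup F] {μ : Measure X}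
    (f : X → F) : eLpNorm f 2 μ ^ 2 = ∫⁻ x, ENNReal.ofReal (‖f x‖ ^ 2) ∂μ := by
  have heLp := eLpNorm_nnreal_pow_eq_lintegral (f := f) (μ := μ) (p := 2) two_ne_zero
  simp only [NNReal.coe_ofNat, ENNReal.rpow_ofNat, ENNReal.coe_ofNat] at heLp
  simp only [heLp, ENNReal.ofReal_pow (norm_nonneg _), ofReal_norm]

lemma lintegral_ofReal_add {X : Type*} [MeasurableSpace X] {μ : Measure X} {f g : X → ℝ}
    (hf : Measurable f) (hf0 : ∀ x, 0 ≤ f x) (hg0 : ∀ x, 0 ≤ g x) :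
    ∫⁻ x, ENNReal.ofReal (f x + g x) ∂μ
      = (∫⁻ x, ENNReal.ofReal (f x) ∂μ) + ∫⁻ x, ENNReal.ofReal (g x) ∂μ := by
  simp only [ENNReal.ofReal_add (hf0 _) (hg0 _)]
  exact lintegral_add_left hf.ennreal_ofReal _

lemma tsum_lintegral_mul_le {X ι : Type*} [MeasurableSpace X] [Countable ι] {μ : Measure X}
    {w : ι → X → ENNReal} {f : X → ENNReal} {K : ENNReal} (hw : ∀ i, Measurable (w i))
    (hf : Measurable f) (hK : ∀ x, ∑' i, w i x ≤ K) :
    ∑' i, ∫⁻ x, w i x * f x ∂μ ≤ K * ∫⁻ x, f x ∂μ :=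
  calc ∑' i, ∫⁻ x, w i x * f x ∂μ = ∫⁻ x, (∑' i, w i x) * f x ∂μ := by
        simp only [← ENNReal.tsum_mul_right]
        exact (lintegral_tsum fun i => ((hw i).mul hf).aemeasurable).symm
    _ ≤ ∫⁻ x, K * f x ∂μ := lintegral_mono fun x => mul_le_mul_left (hK x) _
    _ = K * ∫⁻ x, f x ∂μ := lintegral_const_mul K hf

section MagneticDeriv

variable {E : Type*} [NormedAddCommGroup E] [NormedSpace ℝ E]

/-- The magnetic derivative `c D_v + a` in the direction `v`, where `D_v = -i ∂_v` and `a` is a real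
potential. Both `A` and `B` are of this form. -/
def magneticDeriv (c : ℝ) (v : E) (a : E → ℝ) (u : E → ℂ) (x : E) : ℂ :=
  c * (-I * fderiv ℝ u x v) + a x * u x

variable {c : ℝ} {v : E} {a b : E → ℝ} {u w : E → ℂ} {x : E}

lemma contDiff_magneticDeriv {n : ℕ∞ω} (ha : ContDiff ℝ n a) (hu : ContDiff ℝ (n + 1) u) :
    ContDiff ℝ n (magneticDeriv c v a u) := by
  have hu' : ContDiff ℝ n fun x => fderiv ℝ u x v :=
    (hu.fderiv_right le_rfl).clm_apply contDiff_const
  exact (contDiff_const.mul (contDiff_const.mul hu')).add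
    ((ofRealCLM.contDiff.comp ha).mul (hu.of_le le_self_add))

lemma continuous_magneticDeriv (ha : Continuous a) (hu : ContDiff ℝ 1 u) :
    Continuous (magneticDeriv c v a u) :=
  (contDiff_magneticDeriv (contDiff_zero.2 ha) (by simpa using hu)).continuous

lemma hasCompactSupport_magneticDeriv (hu : HasCompactSupport u) :
    HasCompactSupport (magneticDeriv c v a u) :=
  (hu.fderiv_apply ℝ v).mul_left.mul_left.add hu.mul_left

lemma magneticDeriv_add (hu : DifferentiableAt ℝ u x) (hw : DifferentiableAt ℝ w x) :
    magneticDeriv c v a (fun y => u y + w y) x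
      = magneticDeriv c v a u x + magneticDeriv c v a w x := by
  simp only [magneticDeriv, fderiv_fun_add hu hw, _root_.add_apply]
  ring

lemma magneticDeriv_const_mul (z : ℂ) (hu : DifferentiableAt ℝ u x) :
    magneticDeriv c v a (fun y => z * u y) x = z * magneticDeriv c v a u x := by
  simp only [magneticDeriv, fderiv_const_mul hu, _root_.smul_apply, smul_eq_mul]
  ring

lemma magneticDeriv_ofReal_mul (hb : DifferentiableAt ℝ b x) (hu : DifferentiableAt ℝ u x) :
    magneticDeriv c v a (fun y => b y * u y) x
      = b x * magneticDeriv c v a u x - I * c * (fderiv ℝ b x v * u x) := by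
  have hb' : HasFDerivAt (fun y => (b y : ℂ)) (ofRealCLM.comp (fderiv ℝ b x)) x :=
    ofRealCLM.hasFDerivAt.comp x hb.hasFDerivAt
  simp only [magneticDeriv, (hb'.fun_mul hu.hasFDerivAt).fderiv, _root_.add_apply,
    _root_.smul_apply, ContinuousLinearMap.comp_apply, ofRealCLM_apply, smul_eq_mul]
  ring

lemma magneticDeriv_magneticDeriv_ofReal_mul (ha : ContDiff ℝ 1 a) (hb : ContDiff ℝ 2 b)
    (hu : ContDiff ℝ 2 u) :
    magneticDeriv c v a (magneticDeriv c v a fun y => b y * u y) x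
      = b x * magneticDeriv c v a (magneticDeriv c v a u) x
        - 2 * I * c * (fderiv ℝ b x v * magneticDeriv c v a u x)
        - c ^ 2 * (fderiv ℝ (fun y => fderiv ℝ b y v) x v * u x) := by
  have hbd : Differentiable ℝ b := hb.differentiable two_ne_zero
  have hud : Differentiable ℝ u := hu.differentiable two_ne_zero
  have hb'd : Differentiable ℝ fun y => fderiv ℝ b y v :=
    ((hb.fderiv_right (m := 1) le_rfl).clm_apply contDiff_const).differentiable one_ne_zero
  have hTu : Differentiable ℝ (magneticDeriv c v a u) :=
    (contDiff_magneticDeriv ha hu).differentiable one_ne_zero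
  have hT : (magneticDeriv c v a fun y => b y * u y) = fun y =>
      b y * magneticDeriv c v a u y + -(I * c) * (fderiv ℝ b y v * u y) := by
    funext y
    rw [magneticDeriv_ofReal_mul (hbd y) (hud y)]
    ring
  have hbTu : Differentiable ℝ fun y => b y * magneticDeriv c v a u y :=
    (ofRealCLM.differentiable.comp hbd).mul hTu
  have hb'u : Differentiable ℝ fun y => fderiv ℝ b y v * u y :=
    (ofRealCLM.differentiable.comp hb'd).mul hud
  rw [hT, magneticDeriv_add (hbTu x) ((hb'u x).const_mul _), magneticDeriv_const_mul _ (hb'u x),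
    magneticDeriv_ofReal_mul (hbd x) (hTu x), magneticDeriv_ofReal_mul (hb'd x) (hud x)]
  linear_combination c ^ 2 * (fderiv ℝ (fun y => fderiv ℝ b y v) x v * u x) * I_sq

-- The right-hand side exceeds the left-hand side by `‖b (c D_v + a) u - 2 i c (∂_v b) u‖²`.
lemma sq_mul_norm_magneticDeriv_sq_le (hb : DifferentiableAt ℝ b x)
    (hu : DifferentiableAt ℝ u x) :
    b x ^ 2 * ‖magneticDeriv c v a u x‖ ^ 2
      ≤ 2 * (⟪magneticDeriv c v a (fun y => (b y ^ 2 : ℝ) * u y) x,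
          magneticDeriv c v a u x⟫_ℂ).re
        + 4 * c ^ 2 * (fderiv ℝ b x v ^ 2 * ‖u x‖ ^ 2) := by
  have hb2 : fderiv ℝ (fun y => b y ^ 2) x v = 2 * b x * fderiv ℝ b x v := by
    simp [fderiv_fun_pow 2 hb, mul_assoc]
  set p : ℂ := b x * magneticDeriv c v a u x with hp_def
  set q : ℂ := 2 * I * c * (fderiv ℝ b x v * u x) with hq_def
  have hp : ‖p‖ ^ 2 = b x ^ 2 * ‖magneticDeriv c v a u x‖ ^ 2 := by simp [hp_def, mul_pow]
  have hq : ‖q‖ ^ 2 = 4 * c ^ 2 * (fderiv ℝ b x v ^ 2 * ‖u x‖ ^ 2) := by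
    norm_num [hq_def, mul_pow]
  have hinner : ⟪magneticDeriv c v a (fun y => (b y ^ 2 : ℝ) * u y) x, magneticDeriv c v a u x⟫_ℂ
      = ⟪p - q, p⟫_ℂ := by
    rw [magneticDeriv_ofReal_mul (hb.fun_pow 2) hu, hb2]
    simp only [hp_def, hq_def, RCLike.inner_apply, map_sub, map_mul, map_pow, map_ofNat,
      conj_I, conj_ofReal, ofReal_pow, ofReal_mul, ofReal_ofNat]
    ring
  have hexpand : ‖p - q - p‖ ^ 2 = ‖p - q‖ ^ 2 - 2 * (⟪p - q, p⟫_ℂ).re + ‖p‖ ^ 2 :=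
    norm_sub_sq (𝕜 := ℂ) (p - q) p
  rw [sub_sub_cancel_left, norm_neg] at hexpand
  rw [hinner, ← hp, ← hq]
  linarith [sq_nonneg ‖p - q‖]

section Integral

variable [FiniteDimensional ℝ E] [MeasurableSpace E] [BorelSpace E] {μ : Measure E}
  [μ.IsAddHaarMeasure]

lemma integral_inner_fderiv_eq_neg (hu : ContDiff ℝ 1 u) (hu_supp : HasCompactSupport u)
    (hw : ContDiff ℝ 1 w) :
    ∫ x, ⟪u x, fderiv ℝ w x v⟫_ℂ ∂μ = -∫ x, ⟪fderiv ℝ u x v, w x⟫_ℂ ∂μ := by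
  let B : ℂ →L[ℝ] ℂ →L[ℝ] ℂ := (ContinuousLinearMap.mul ℝ ℂ).comp (conjCLE : ℂ →L[ℝ] ℂ)
  have hB : ∀ z z' : ℂ, B z z' = ⟪z, z'⟫_ℂ := fun z z' => mul_comm _ _
  have hdu : Continuous fun x => fderiv ℝ u x v :=
    (hu.continuous_fderiv one_ne_zero).clm_apply continuous_const
  have hdw : Continuous fun x => fderiv ℝ w x v :=
    (hw.continuous_fderiv one_ne_zero).clm_apply continuous_const
  have hibp := integral_bilinear_fderiv_right_eq_neg_left_of_integrable (μ := μ) (f := u) (g := w)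
    (v := v) (B := B)
  simp only [hB] at hibp
  exact hibp
    (integrable_inner_of_hasCompactSupport_left hdu (hu_supp.fderiv_apply ℝ v) hw.continuous)
    (integrable_inner_of_hasCompactSupport_left hu.continuous hu_supp hdw)
    (integrable_inner_of_hasCompactSupport_left hu.continuous hu_supp hw.continuous)
    (fun x _ => hu.differentiable one_ne_zero x) (fun x _ => hw.differentiable one_ne_zero x)

theorem integral_inner_magneticDeriv_right (ha : Continuous a) (hu : ContDiff ℝ 1 u)
    (hu_supp : HasCompactSupport u) (hw : ContDiff ℝ 1 w) :
    ∫ x, ⟪u x, magneticDeriv c v a w x⟫_ℂ ∂μ = ∫ x, ⟪magneticDeriv c v a u x, w x⟫_ℂ ∂μ := by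
  have hdu : Continuous fun x => fderiv ℝ u x v :=
    (hu.continuous_fderiv one_ne_zero).clm_apply continuous_const
  have hdw : Continuous fun x => fderiv ℝ w x v :=
    (hw.continuous_fderiv one_ne_zero).clm_apply continuous_const
  have hdu_supp : HasCompactSupport fun x => fderiv ℝ u x v := hu_supp.fderiv_apply ℝ v
  have hdiff : ∀ x, ⟪u x, magneticDeriv c v a w x⟫_ℂ - ⟪magneticDeriv c v a u x, w x⟫_ℂ
      = -(I * c) * (⟪u x, fderiv ℝ w x v⟫_ℂ + ⟪fderiv ℝ u x v, w x⟫_ℂ) := fun x => by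
    simp only [magneticDeriv, RCLike.inner_apply, map_add, map_mul, map_neg, conj_I, conj_ofReal]
    ring
  rw [← sub_eq_zero, ← integral_sub
    (integrable_inner_of_hasCompactSupport_left hu.continuous hu_supp
      (continuous_magneticDeriv ha hw))
    (integrable_inner_of_hasCompactSupport_left (continuous_magneticDeriv ha hu)
      (hasCompactSupport_magneticDeriv hu_supp) hw.continuous)]
  simp only [hdiff]
  rw [integral_const_mul, integral_add
    (integrable_inner_of_hasCompactSupport_left hu.continuous hu_supp hdw)
    (integrable_inner_of_hasCompactSupport_left hdu hdu_supp hw.continuous),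
    integral_inner_fderiv_eq_neg hu hu_supp hw, neg_add_cancel, mul_zero]

theorem integral_re_inner_magneticDeriv_right (ha : Continuous a) (hu : ContDiff ℝ 1 u)
    (hu_supp : HasCompactSupport u) (hw : ContDiff ℝ 1 w) :
    ∫ x, (⟪u x, magneticDeriv c v a w x⟫_ℂ).re ∂μ
      = ∫ x, (⟪magneticDeriv c v a u x, w x⟫_ℂ).re ∂μ :=
  calc ∫ x, (⟪u x, magneticDeriv c v a w x⟫_ℂ).re ∂μ
      = (∫ x, ⟪u x, magneticDeriv c v a w x⟫_ℂ ∂μ).re :=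
        integral_re (integrable_inner_of_hasCompactSupport_left hu.continuous hu_supp
          (continuous_magneticDeriv ha hw))
    _ = (∫ x, ⟪magneticDeriv c v a u x, w x⟫_ℂ ∂μ).re := by
        rw [integral_inner_magneticDeriv_right ha hu hu_supp hw]
    _ = ∫ x, (⟪magneticDeriv c v a u x, w x⟫_ℂ).re ∂μ :=
        (integral_re (integrable_inner_of_hasCompactSupport_left (continuous_magneticDeriv ha hu)
          (hasCompactSupport_magneticDeriv hu_supp) hw.continuous)).symm

theorem integral_sq_mul_norm_magneticDeriv_sq_le (ha : ContDiff ℝ 1 a) (hb : ContDiff ℝ 1 b)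
    (hb_supp : HasCompactSupport b) (hu : ContDiff ℝ 2 u) :
    ∫ x, b x ^ 2 * ‖magneticDeriv c v a u x‖ ^ 2 ∂μ
      ≤ ∫ x, (2 * (b x ^ 2 * (⟪u x, magneticDeriv c v a (magneticDeriv c v a u) x⟫_ℂ).re)
        + 4 * c ^ 2 * (fderiv ℝ b x v ^ 2 * ‖u x‖ ^ 2)) ∂μ := by
  set Tu : E → ℂ := magneticDeriv c v a u
  set w : E → ℂ := fun x => (b x ^ 2 : ℝ) * u x with hw_def
  have hu1 : ContDiff ℝ 1 u := hu.of_le one_le_two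
  have hTu : ContDiff ℝ 1 Tu := contDiff_magneticDeriv ha hu
  have hw : ContDiff ℝ 1 w := (ofRealCLM.contDiff.comp (hb.pow 2)).mul hu1
  have hw_supp : HasCompactSupport w :=
    ((hasCompactSupport_sq hb_supp).comp_left ofReal_zero).mul_right
  have hdb : Continuous fun x => fderiv ℝ b x v :=
    (hb.continuous_fderiv one_ne_zero).clm_apply continuous_const
  have hint_Tw : Integrable (fun x => 2 * (⟪magneticDeriv c v a w x, Tu x⟫_ℂ).re) μ :=
    ((integrable_inner_of_hasCompactSupport_left (continuous_magneticDeriv ha.continuous hw)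
      (hasCompactSupport_magneticDeriv hw_supp) hTu.continuous).re).const_mul 2
  have hint_w : Integrable (fun x => 2 * (⟪w x, magneticDeriv c v a Tu x⟫_ℂ).re) μ :=
    ((integrable_inner_of_hasCompactSupport_left hw.continuous hw_supp
      (continuous_magneticDeriv ha.continuous hTu)).re).const_mul 2
  have hint_db : Integrable (fun x => 4 * c ^ 2 * (fderiv ℝ b x v ^ 2 * ‖u x‖ ^ 2)) μ :=
    (integrable_mul_of_hasCompactSupport_left (hdb.pow 2)
      (hasCompactSupport_sq (hb_supp.fderiv_apply ℝ v)) (hu.continuous.norm.pow 2)).const_mul _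
  have hre : ∀ x, b x ^ 2 * (⟪u x, magneticDeriv c v a Tu x⟫_ℂ).re
      = (⟪w x, magneticDeriv c v a Tu x⟫_ℂ).re := fun x => by
    simp only [hw_def, RCLike.inner_apply, map_mul, conj_ofReal]
    rw [mul_left_comm, re_ofReal_mul]
  simp only [hre]
  refine (integral_mono (integrable_mul_of_hasCompactSupport_left (hb.continuous.pow 2)
    (hasCompactSupport_sq hb_supp) (hTu.continuous.norm.pow 2)) (hint_Tw.add hint_db) fun x =>
      sq_mul_norm_magneticDeriv_sq_le (hb.differentiable one_ne_zero x)
        (hu1.differentiable one_ne_zero x)).trans_eq ?_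
  simp only [Pi.add_apply]
  rw [integral_add hint_Tw hint_db, integral_add hint_w hint_db, integral_const_mul,
    integral_const_mul 2, integral_re_inner_magneticDeriv_right ha.continuous hw hw_supp hTu]

end Integral

end MagneticDeriv

section PartialDeriv

variable {φ b : R2 → ℝ} {h : ℝ} {n : ℕ∞ω} {j : Fin 2}

lemma contDiff_pdR (j : Fin 2) (hb : ContDiff ℝ (n + 1) b) : ContDiff ℝ n (pdR j b) :=
  (hb.fderiv_right le_rfl).clm_apply contDiff_const

lemma continuous_pdR (j : Fin 2) (hb : ContDiff ℝ 1 b) : Continuous (pdR j b) :=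
  (hb.continuous_fderiv one_ne_zero).clm_apply continuous_const

lemma hasCompactSupport_pdR (j : Fin 2) (hb : HasCompactSupport b) : HasCompactSupport (pdR j b) :=
  hb.fderiv_apply ℝ _

lemma continuous_lapR (hb : ContDiff ℝ 2 b) : Continuous (lapR b) :=
  (continuous_pdR 0 (contDiff_pdR 0 hb)).add (continuous_pdR 1 (contDiff_pdR 1 hb))

lemma hasCompactSupport_lapR (hb : HasCompactSupport b) : HasCompactSupport (lapR b) :=
  (hasCompactSupport_pdR 0 (hasCompactSupport_pdR 0 hb)).add
    (hasCompactSupport_pdR 1 (hasCompactSupport_pdR 1 hb))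

lemma pdR_comp_sub (p : R2) : pdR j (fun y => b (y - p)) = fun y => pdR j b (y - p) := by
  funext x
  rw [pdR, fderiv_comp_sub, pdR]

lemma lapR_comp_sub (p x : R2) : lapR (fun y => b (y - p)) x = lapR b (x - p) := by
  simp only [lapR, pdR_comp_sub]

lemma pdR_comp_smul (s : ℝ) : pdR j (fun y => b (s • y)) = fun y => s * pdR j b (s • y) := by
  funext x
  simp only [pdR, fderiv_comp_smul, _root_.smul_apply, smul_eq_mul]

lemma pdR_const_mul (s : ℝ) : pdR j (fun y => s * b y) = fun y => s * pdR j b y := by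
  funext x
  rw [pdR, show (fun y => s * b y) = s • b from rfl, fderiv_const_smul_field]
  rfl

lemma lapR_comp_smul (s : ℝ) (x : R2) : lapR (fun y => b (s • y)) x = s ^ 2 * lapR b (s • x) := by
  have hpd (j : Fin 2) :
      pdR j (pdR j fun y => b (s • y)) x = s ^ 2 * pdR j (pdR j b) (s • x) := by
    rw [pdR_comp_smul, pdR_const_mul, pdR_comp_smul, pow_two, mul_assoc]
  rw [lapR, lapR, hpd, hpd, mul_add]

lemma contDiff_phih (hφ : ContDiff ℝ n φ) : ContDiff ℝ n (phih φ h) :=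
  hφ.comp (contDiff_const_smul _)

lemma lapR_phih (hh : 0 < h) (x : R2) :
    lapR (phih φ h) x = h⁻¹ * lapR φ (h ^ (-(1 / 2 : ℝ)) • x) := by
  have hsq : (h ^ (-(1 / 2 : ℝ))) ^ 2 = h⁻¹ := by
    rw [← Real.rpow_natCast, ← Real.rpow_mul hh.le, ← Real.rpow_neg_one]
    norm_num
  rw [← hsq, ← lapR_comp_smul]
  rfl

lemma sq_div_four_mul_lapR_phih_le {Λ : ℝ} (hφ : ∀ x, lapR φ x ≤ Λ) (hh : h ∈ Set.Ioc 0 1)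
    (x : R2) : h ^ 2 / 4 * lapR (phih φ h) x ≤ |Λ| / 4 :=
  have hh0 : 0 < h := hh.1
  calc h ^ 2 / 4 * lapR (phih φ h) x = h / 4 * lapR φ (h ^ (-(1 / 2 : ℝ)) • x) := by
        rw [lapR_phih hh0]
        field_simp
    _ ≤ h / 4 * |Λ| := by
        gcongr
        exact (hφ _).trans (le_abs_self Λ)
    _ ≤ |Λ| / 4 := by nlinarith [hh.2, abs_nonneg Λ]

lemma pdR_pdR_le_norm_iteratedFDeriv (hφ : ContDiff ℝ 2 φ) (x : R2) :
    pdR j (pdR j φ) x ≤ ‖iteratedFDeriv ℝ 2 φ x‖ := by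
  set e : R2 := EuclideanSpace.single j 1
  have hpd : pdR j (pdR j φ) x = iteratedFDeriv ℝ 2 φ x ![e, e] := by
    have hdiff : DifferentiableAt ℝ (fderiv ℝ φ) x :=
      (hφ.fderiv_right (m := 1) le_rfl).differentiable one_ne_zero x
    change fderiv ℝ (fun y => fderiv ℝ φ y e) x e = _
    simp [fderiv_clm_apply hdiff (differentiableAt_const e), iteratedFDeriv_two_apply]
  calc pdR j (pdR j φ) x ≤ ‖iteratedFDeriv ℝ 2 φ x ![e, e]‖ := hpd ▸ Real.le_norm_self _
    _ ≤ ‖iteratedFDeriv ℝ 2 φ x‖ * ∏ i, ‖![e, e] i‖ := ContinuousMultilinearMap.le_opNorm _ _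
    _ = ‖iteratedFDeriv ℝ 2 φ x‖ := by simp [Fin.prod_univ_two, e]

lemma lapR_le_of_norm_iteratedFDeriv_le {C : ℝ} (hφ : ContDiff ℝ 2 φ)
    (hC : ∀ x, ‖iteratedFDeriv ℝ 2 φ x‖ ≤ C) (x : R2) : lapR φ x ≤ 2 * C := by
  have hpd (j : Fin 2) : pdR j (pdR j φ) x ≤ C :=
    (pdR_pdR_le_norm_iteratedFDeriv hφ x).trans (hC x)
  exact (add_le_add (hpd 0) (hpd 1)).trans_eq (two_mul C).symm

end PartialDeriv

section Schrodinger

variable {φ b : R2 → ℝ} {h κ : ℝ} {u : R2 → ℂ} {x : R2}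

lemma opAh_eq_magneticDeriv : opAh φ h = magneticDeriv (h / 2) (EuclideanSpace.single 0 1)
    fun x => -(h / 2 * pdR 1 (phih φ h) x) := by
  funext u x
  simp only [opAh, Dop, pdC, magneticDeriv, ofReal_neg, neg_mul, sub_eq_add_neg]

lemma opBh_eq_magneticDeriv : opBh φ h = magneticDeriv (h / 2) (EuclideanSpace.single 1 1)
    fun x => h / 2 * pdR 0 (phih φ h) x :=
  rfl

lemma contDiff_mul_pdR_phih (hφ : ContDiff ℝ 2 φ) (s : ℝ) (j : Fin 2) :
    ContDiff ℝ 1 fun x => s * pdR j (phih φ h) x :=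
  contDiff_const.mul (contDiff_pdR j (contDiff_phih hφ))

lemma contDiff_opAh (hφ : ContDiff ℝ 2 φ) (hu : ContDiff ℝ 2 u) : ContDiff ℝ 1 (opAh φ h u) :=
  opAh_eq_magneticDeriv ▸ contDiff_magneticDeriv (contDiff_mul_pdR_phih hφ _ 1).neg hu

lemma contDiff_opBh (hφ : ContDiff ℝ 2 φ) (hu : ContDiff ℝ 2 u) : ContDiff ℝ 1 (opBh φ h u) :=
  opBh_eq_magneticDeriv ▸ contDiff_magneticDeriv (contDiff_mul_pdR_phih hφ _ 0) hu

lemma continuous_opAh (hφ : ContDiff ℝ 2 φ) (hu : ContDiff ℝ 1 u) : Continuous (opAh φ h u) :=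
  opAh_eq_magneticDeriv ▸
    continuous_magneticDeriv (contDiff_mul_pdR_phih hφ _ 1).neg.continuous hu

lemma continuous_opBh (hφ : ContDiff ℝ 2 φ) (hu : ContDiff ℝ 1 u) : Continuous (opBh φ h u) :=
  opBh_eq_magneticDeriv ▸ continuous_magneticDeriv (contDiff_mul_pdR_phih hφ _ 0).continuous hu

lemma opPh_ofReal_mul (hφ : ContDiff ℝ 2 φ) (hb : ContDiff ℝ 2 b) (hu : ContDiff ℝ 2 u) :
    opPh φ h (fun y => b y * u y) x = b x * opPh φ h u x
      - I * h * (pdR 0 b x * opAh φ h u x + pdR 1 b x * opBh φ h u x)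
      - h ^ 2 / 4 * (lapR b x * u x) := by
  have hA : opAh φ h (opAh φ h fun y => b y * u y) x = b x * opAh φ h (opAh φ h u) x
      - 2 * I * (h / 2 : ℝ) * (pdR 0 b x * opAh φ h u x)
      - (h / 2 : ℝ) ^ 2 * (pdR 0 (pdR 0 b) x * u x) := by
    rw [opAh_eq_magneticDeriv]
    exact magneticDeriv_magneticDeriv_ofReal_mul (contDiff_mul_pdR_phih hφ _ 1).neg hb hu
  have hB : opBh φ h (opBh φ h fun y => b y * u y) x = b x * opBh φ h (opBh φ h u) x
      - 2 * I * (h / 2 : ℝ) * (pdR 1 b x * opBh φ h u x)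
      - (h / 2 : ℝ) ^ 2 * (pdR 1 (pdR 1 b) x * u x) := by
    rw [opBh_eq_magneticDeriv]
    exact magneticDeriv_magneticDeriv_ofReal_mul (contDiff_mul_pdR_phih hφ _ 0) hb hu
  simp only [opPh, hA, hB, lapR, ofReal_add, ofReal_div, ofReal_ofNat]
  ring

lemma norm_opPh_ofReal_mul_sq_le (hφ : ContDiff ℝ 2 φ) (hh : h ∈ Set.Ioc 0 1)
    (hb : ContDiff ℝ 2 b) (hu : ContDiff ℝ 2 u) (hPu : opPh φ h u x = 0) :
    ‖opPh φ h (fun y => b y * u y) x‖ ^ 2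
      ≤ 3 * h ^ 2 * (pdR 0 b x ^ 2 * ‖opAh φ h u x‖ ^ 2 + pdR 1 b x ^ 2 * ‖opBh φ h u x‖ ^ 2
        + lapR b x ^ 2 * ‖u x‖ ^ 2) := by
  obtain ⟨hh0, hh1⟩ := hh
  set p : ℝ := |pdR 0 b x| * ‖opAh φ h u x‖ with hp_def
  set q : ℝ := |pdR 1 b x| * ‖opBh φ h u x‖ with hq_def
  set r : ℝ := |lapR b x| * ‖u x‖ with hr_def
  have hnorm : ‖opPh φ h (fun y => b y * u y) x‖ ≤ h * (p + q + r) :=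
    calc ‖opPh φ h (fun y => b y * u y) x‖
        = ‖-(I * h * (pdR 0 b x * opAh φ h u x + pdR 1 b x * opBh φ h u x))
            - h ^ 2 / 4 * (lapR b x * u x)‖ := by
          rw [opPh_ofReal_mul hφ hb hu, hPu, mul_zero, zero_sub]
      _ ≤ h * (p + q) + h ^ 2 / 4 * r := by
          refine (norm_sub_le _ _).trans (add_le_add ?_ (le_of_eq ?_))
          · simp only [norm_neg, norm_mul, norm_I, norm_real, Real.norm_eq_abs, abs_of_pos hh0,
              one_mul]
            gcongr
            exact (norm_add_le _ _).trans_eq (by simp [p, q])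
          · simp [r, abs_of_pos hh0]
      _ ≤ h * (p + q) + h * r := by
          gcongr
          nlinarith
      _ = h * (p + q + r) := by ring
  calc ‖opPh φ h (fun y => b y * u y) x‖ ^ 2 ≤ (h * (p + q + r)) ^ 2 := by gcongr
    _ ≤ 3 * h ^ 2 * (p ^ 2 + q ^ 2 + r ^ 2) := by
        nlinarith [mul_nonneg (sq_nonneg h) (sq_nonneg (p - q)),
          mul_nonneg (sq_nonneg h) (sq_nonneg (p - r)),
          mul_nonneg (sq_nonneg h) (sq_nonneg (q - r))]
    _ = _ := by simp only [hp_def, hq_def, hr_def, mul_pow, sq_abs]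

/-- The weight in front of `|u|²` that bounds the energy `∫ χ² (|Au|² + |Bu|²)` of a solution of
`Pu = 0`; the parameter `κ` stands for an upper bound of `(h²/4) Δφ_h`. -/
def energyWeight (κ : ℝ) (χ : R2 → ℝ) (x : R2) : ℝ :=
  2 * (1 + κ) * χ x ^ 2 + pdR 0 χ x ^ 2 + pdR 1 χ x ^ 2

lemma continuous_energyWeight {χ : R2 → ℝ} (hχ : ContDiff ℝ 1 χ) :
    Continuous (energyWeight κ χ) :=
  ((continuous_const.mul (hχ.continuous.pow 2)).add ((continuous_pdR 0 hχ).pow 2)).add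
    ((continuous_pdR 1 hχ).pow 2)

lemma hasCompactSupport_energyWeight {χ : R2 → ℝ} (hχ : HasCompactSupport χ) :
    HasCompactSupport (energyWeight κ χ) :=
  ((hasCompactSupport_sq hχ).mul_left.add
    (hasCompactSupport_sq (hasCompactSupport_pdR 0 hχ))).add
      (hasCompactSupport_sq (hasCompactSupport_pdR 1 hχ))

lemma re_inner_opAh_sq_add_re_inner_opBh_sq (hPu : opPh φ h u x = 0) :
    (⟪u x, opAh φ h (opAh φ h u) x⟫_ℂ).re + (⟪u x, opBh φ h (opBh φ h u) x⟫_ℂ).re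
      = (1 + h ^ 2 / 4 * lapR (phih φ h) x) * ‖u x‖ ^ 2 := by
  have hsum : opAh φ h (opAh φ h u) x + opBh φ h (opBh φ h u) x
      = (1 + h ^ 2 / 4 * lapR (phih φ h) x : ℝ) * u x := by
    rw [ofReal_add, ofReal_one]
    linear_combination (norm := (simp only [opPh]; ring)) hPu
  rw [← add_re, ← inner_add_right, hsum, RCLike.inner_apply, mul_assoc, mul_conj, re_ofReal_mul,
    ofReal_re, normSq_eq_norm_sq]

lemma re_inner_add_pdR_sq_mul_le_energyWeight_mul {χ : R2 → ℝ}
    (hκ : h ^ 2 / 4 * lapR (phih φ h) x ≤ κ) (hh : h ∈ Set.Ioc 0 1) (hPu : opPh φ h u x = 0) :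
    2 * (χ x ^ 2 * (⟪u x, opAh φ h (opAh φ h u) x⟫_ℂ).re)
        + 4 * (h / 2) ^ 2 * (pdR 0 χ x ^ 2 * ‖u x‖ ^ 2)
        + (2 * (χ x ^ 2 * (⟪u x, opBh φ h (opBh φ h u) x⟫_ℂ).re)
          + 4 * (h / 2) ^ 2 * (pdR 1 χ x ^ 2 * ‖u x‖ ^ 2))
      ≤ energyWeight κ χ x * ‖u x‖ ^ 2 := by
  have hre := re_inner_opAh_sq_add_re_inner_opBh_sq hPu
  have hh2 : h ^ 2 ≤ 1 := pow_le_one₀ hh.1.le hh.2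
  calc _ = 2 * χ x ^ 2 * ((⟪u x, opAh φ h (opAh φ h u) x⟫_ℂ).re
            + (⟪u x, opBh φ h (opBh φ h u) x⟫_ℂ).re)
          + h ^ 2 * ((pdR 0 χ x ^ 2 + pdR 1 χ x ^ 2) * ‖u x‖ ^ 2) := by ring
    _ = 2 * χ x ^ 2 * ((1 + h ^ 2 / 4 * lapR (phih φ h) x) * ‖u x‖ ^ 2)
          + h ^ 2 * ((pdR 0 χ x ^ 2 + pdR 1 χ x ^ 2) * ‖u x‖ ^ 2) := by rw [hre]
    _ ≤ 2 * χ x ^ 2 * ((1 + κ) * ‖u x‖ ^ 2)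
          + 1 * ((pdR 0 χ x ^ 2 + pdR 1 χ x ^ 2) * ‖u x‖ ^ 2) := by gcongr
    _ = energyWeight κ χ x * ‖u x‖ ^ 2 := by
        rw [energyWeight]
        ring

lemma integrable_sq_mul_re_inner_add_sq_pdR_mul_norm_sq {χ : R2 → ℝ} {w : R2 → ℂ} {s : ℝ}
    (j : Fin 2) (hχ : ContDiff ℝ 1 χ) (hχ_supp : HasCompactSupport χ) (hu : Continuous u)
    (hw : Continuous w) : Integrable fun x =>
      2 * (χ x ^ 2 * (⟪u x, w x⟫_ℂ).re) + s * (pdR j χ x ^ 2 * ‖u x‖ ^ 2) := by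
  have hint_inner : Integrable fun x => χ x ^ 2 * (⟪u x, w x⟫_ℂ).re :=
    integrable_mul_of_hasCompactSupport_left (hχ.continuous.pow 2) (hasCompactSupport_sq hχ_supp)
      (continuous_re.comp (hu.inner hw))
  have hint_pdR : Integrable fun x => pdR j χ x ^ 2 * ‖u x‖ ^ 2 :=
    integrable_mul_of_hasCompactSupport_left ((continuous_pdR j hχ).pow 2)
      (hasCompactSupport_sq (hasCompactSupport_pdR j hχ_supp)) (hu.norm.pow 2)
  exact (hint_inner.const_mul 2).add (hint_pdR.const_mul s)

theorem integral_sq_mul_norm_opAh_sq_add_norm_opBh_sq_le (hφ : ContDiff ℝ 2 φ)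
    (hκ : ∀ x, h ^ 2 / 4 * lapR (phih φ h) x ≤ κ) (hh : h ∈ Set.Ioc 0 1) (hu : ContDiff ℝ 2 u)
    (hPu : ∀ x, opPh φ h u x = 0) {χ : R2 → ℝ} (hχ : ContDiff ℝ 1 χ)
    (hχ_supp : HasCompactSupport χ) :
    ∫ x, χ x ^ 2 * (‖opAh φ h u x‖ ^ 2 + ‖opBh φ h u x‖ ^ 2)
      ≤ ∫ x, energyWeight κ χ x * ‖u x‖ ^ 2 := by
  have hAu : ContDiff ℝ 1 (opAh φ h u) := contDiff_opAh hφ hu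
  have hBu : ContDiff ℝ 1 (opBh φ h u) := contDiff_opBh hφ hu
  have hint_sq {f : R2 → ℝ} (hf : Continuous f) : Integrable fun x => χ x ^ 2 * f x :=
    integrable_mul_of_hasCompactSupport_left (hχ.continuous.pow 2)
      (hasCompactSupport_sq hχ_supp) hf
  have hA : ∫ x, χ x ^ 2 * ‖opAh φ h u x‖ ^ 2
      ≤ ∫ x, (2 * (χ x ^ 2 * (⟪u x, opAh φ h (opAh φ h u) x⟫_ℂ).re)
        + 4 * (h / 2) ^ 2 * (pdR 0 χ x ^ 2 * ‖u x‖ ^ 2)) := by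
    rw [opAh_eq_magneticDeriv]
    exact integral_sq_mul_norm_magneticDeriv_sq_le (contDiff_mul_pdR_phih hφ _ 1).neg hχ hχ_supp hu
  have hB : ∫ x, χ x ^ 2 * ‖opBh φ h u x‖ ^ 2
      ≤ ∫ x, (2 * (χ x ^ 2 * (⟪u x, opBh φ h (opBh φ h u) x⟫_ℂ).re)
        + 4 * (h / 2) ^ 2 * (pdR 1 χ x ^ 2 * ‖u x‖ ^ 2)) := by
    rw [opBh_eq_magneticDeriv]
    exact integral_sq_mul_norm_magneticDeriv_sq_le (contDiff_mul_pdR_phih hφ _ 0) hχ hχ_supp hu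
  have hint_A := integrable_sq_mul_re_inner_add_sq_pdR_mul_norm_sq (s := 4 * (h / 2) ^ 2) 0 hχ
    hχ_supp hu.continuous (continuous_opAh (h := h) hφ hAu)
  have hint_B := integrable_sq_mul_re_inner_add_sq_pdR_mul_norm_sq (s := 4 * (h / 2) ^ 2) 1 hχ
    hχ_supp hu.continuous (continuous_opBh (h := h) hφ hBu)
  calc ∫ x, χ x ^ 2 * (‖opAh φ h u x‖ ^ 2 + ‖opBh φ h u x‖ ^ 2)
      = (∫ x, χ x ^ 2 * ‖opAh φ h u x‖ ^ 2) + ∫ x, χ x ^ 2 * ‖opBh φ h u x‖ ^ 2 := by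
        simp only [mul_add]
        exact integral_add (hint_sq (hAu.continuous.norm.pow 2))
          (hint_sq (hBu.continuous.norm.pow 2))
    _ ≤ _ := add_le_add hA hB
    _ = _ := (integral_add hint_A hint_B).symm
    _ ≤ ∫ x, energyWeight κ χ x * ‖u x‖ ^ 2 :=
        integral_mono (hint_A.add hint_B) (integrable_mul_of_hasCompactSupport_left
          (continuous_energyWeight hχ) (hasCompactSupport_energyWeight hχ_supp)
          (hu.continuous.norm.pow 2)) fun x =>
            re_inner_add_pdR_sq_mul_le_energyWeight_mul (hκ x) hh (hPu x)

lemma energyWeight_nonneg {χ : R2 → ℝ} (hκ : 0 ≤ κ) (x : R2) : 0 ≤ energyWeight κ χ x := by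
  unfold energyWeight
  positivity

/-- The weight in front of `|u|²` that bounds `∫ |P(bu)|²`, up to the factor `3h²`, for a solution
of `Pu = 0`; it collects the energy weights of the first derivatives of `b` and the contribution of
`Δb`. -/
def cutoffWeight (κ : ℝ) (b : R2 → ℝ) (x : R2) : ℝ :=
  energyWeight κ (pdR 0 b) x + energyWeight κ (pdR 1 b) x + lapR b x ^ 2

lemma continuous_cutoffWeight (hb : ContDiff ℝ 2 b) : Continuous (cutoffWeight κ b) :=
  ((continuous_energyWeight (contDiff_pdR 0 hb)).add
    (continuous_energyWeight (contDiff_pdR 1 hb))).add ((continuous_lapR hb).pow 2)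

lemma hasCompactSupport_cutoffWeight (hb : HasCompactSupport b) :
    HasCompactSupport (cutoffWeight κ b) :=
  ((hasCompactSupport_energyWeight (hasCompactSupport_pdR 0 hb)).add
    (hasCompactSupport_energyWeight (hasCompactSupport_pdR 1 hb))).add
      (hasCompactSupport_sq (hasCompactSupport_lapR hb))

lemma cutoffWeight_nonneg (hκ : 0 ≤ κ) (x : R2) : 0 ≤ cutoffWeight κ b x := by
  unfold cutoffWeight energyWeight
  positivity

lemma cutoffWeight_comp_sub (p x : R2) :
    cutoffWeight κ (fun y => b (y - p)) x = cutoffWeight κ b (x - p) := by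
  simp only [cutoffWeight, energyWeight, lapR_comp_sub, pdR_comp_sub]

theorem lintegral_sq_mul_norm_opAh_sq_add_norm_opBh_sq_le (hφ : ContDiff ℝ 2 φ) (hκ0 : 0 ≤ κ)
    (hκ : ∀ x, h ^ 2 / 4 * lapR (phih φ h) x ≤ κ) (hh : h ∈ Set.Ioc 0 1) (hu : ContDiff ℝ 2 u)
    (hPu : ∀ x, opPh φ h u x = 0) {χ : R2 → ℝ} (hχ : ContDiff ℝ 1 χ)
    (hχ_supp : HasCompactSupport χ) :
    ∫⁻ x, ENNReal.ofReal (χ x ^ 2 * (‖opAh φ h u x‖ ^ 2 + ‖opBh φ h u x‖ ^ 2))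
      ≤ ∫⁻ x, ENNReal.ofReal (energyWeight κ χ x * ‖u x‖ ^ 2) := by
  have hu1 : ContDiff ℝ 1 u := hu.of_le one_le_two
  have hint_energy : Integrable fun x => χ x ^ 2 * (‖opAh φ h u x‖ ^ 2 + ‖opBh φ h u x‖ ^ 2) :=
    integrable_mul_of_hasCompactSupport_left (hχ.continuous.pow 2) (hasCompactSupport_sq hχ_supp)
      (((continuous_opAh hφ hu1).norm.pow 2).add ((continuous_opBh hφ hu1).norm.pow 2))
  have hint_weight : Integrable fun x => energyWeight κ χ x * ‖u x‖ ^ 2 :=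
    integrable_mul_of_hasCompactSupport_left (continuous_energyWeight hχ)
      (hasCompactSupport_energyWeight hχ_supp) (hu.continuous.norm.pow 2)
  rw [← ofReal_integral_eq_lintegral_ofReal hint_energy (ae_of_all _ fun x => by positivity),
    ← ofReal_integral_eq_lintegral_ofReal hint_weight
      (ae_of_all _ fun x => mul_nonneg (energyWeight_nonneg hκ0 x) (sq_nonneg _))]
  exact ENNReal.ofReal_le_ofReal
    (integral_sq_mul_norm_opAh_sq_add_norm_opBh_sq_le hφ hκ hh hu hPu hχ hχ_supp)

lemma lintegral_cutoffWeight_mul (hκ : 0 ≤ κ) (hb : ContDiff ℝ 2 b) (hu : Continuous u) :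
    ∫⁻ x, ENNReal.ofReal (cutoffWeight κ b x) * ENNReal.ofReal (‖u x‖ ^ 2)
      = (∫⁻ x, ENNReal.ofReal (energyWeight κ (pdR 0 b) x * ‖u x‖ ^ 2))
        + (∫⁻ x, ENNReal.ofReal (energyWeight κ (pdR 1 b) x * ‖u x‖ ^ 2))
        + ∫⁻ x, ENNReal.ofReal (lapR b x ^ 2 * ‖u x‖ ^ 2) := by
  have hcont (j : Fin 2) : Continuous (energyWeight κ (pdR j b)) :=
    continuous_energyWeight (contDiff_pdR j hb)
  have hnonneg (j : Fin 2) (x : R2) : 0 ≤ energyWeight κ (pdR j b) x * ‖u x‖ ^ 2 :=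
    mul_nonneg (energyWeight_nonneg hκ x) (sq_nonneg _)
  simp only [← ENNReal.ofReal_mul (cutoffWeight_nonneg hκ _)]
  simp only [cutoffWeight, add_mul]
  rw [lintegral_ofReal_add (by fun_prop) (fun x => add_nonneg (hnonneg 0 x) (hnonneg 1 x))
      (fun x => by positivity),
    lintegral_ofReal_add (by fun_prop) (hnonneg 0) (hnonneg 1)]

theorem eLpNorm_opPh_ofReal_mul_sq_le (hφ : ContDiff ℝ 2 φ) (hκ0 : 0 ≤ κ)
    (hκ : ∀ x, h ^ 2 / 4 * lapR (phih φ h) x ≤ κ) (hh : h ∈ Set.Ioc 0 1) (hb : ContDiff ℝ 2 b)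
    (hb_supp : HasCompactSupport b) (hu : ContDiff ℝ 2 u) (hPu : ∀ x, opPh φ h u x = 0) :
    eLpNorm (opPh φ h fun y => b y * u y) 2 volume ^ 2
      ≤ ENNReal.ofReal (3 * h ^ 2) *
        ∫⁻ x, ENNReal.ofReal (cutoffWeight κ b x) * ENNReal.ofReal (‖u x‖ ^ 2) := by
  set energy : R2 → ℝ := fun x => ‖opAh φ h u x‖ ^ 2 + ‖opBh φ h u x‖ ^ 2 with henergy
  have henergy_cont : Continuous energy :=
    ((continuous_opAh hφ (hu.of_le one_le_two)).norm.pow 2).add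
      ((continuous_opBh hφ (hu.of_le one_le_two)).norm.pow 2)
  have hpointwise : ∀ x, ‖opPh φ h (fun y => b y * u y) x‖ ^ 2
      ≤ 3 * h ^ 2 * (pdR 0 b x ^ 2 * energy x + pdR 1 b x ^ 2 * energy x
        + lapR b x ^ 2 * ‖u x‖ ^ 2) := fun x =>
    (norm_opPh_ofReal_mul_sq_le hφ hh hb hu (hPu x)).trans <| by
      gcongr <;> simp only [henergy, le_add_iff_nonneg_left, le_add_iff_nonneg_right, sq_nonneg]
  have hcont (j : Fin 2) : Continuous (pdR j b) := continuous_pdR j (hb.of_le one_le_two)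
  calc eLpNorm (opPh φ h fun y => b y * u y) 2 volume ^ 2
      = ∫⁻ x, ENNReal.ofReal (‖opPh φ h (fun y => b y * u y) x‖ ^ 2) := eLpNorm_two_sq _
    _ ≤ ∫⁻ x, ENNReal.ofReal (3 * h ^ 2 * (pdR 0 b x ^ 2 * energy x + pdR 1 b x ^ 2 * energy x
        + lapR b x ^ 2 * ‖u x‖ ^ 2)) :=
        lintegral_mono fun x => ENNReal.ofReal_le_ofReal (hpointwise x)
    _ = ENNReal.ofReal (3 * h ^ 2) * ((∫⁻ x, ENNReal.ofReal (pdR 0 b x ^ 2 * energy x))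
        + (∫⁻ x, ENNReal.ofReal (pdR 1 b x ^ 2 * energy x))
        + ∫⁻ x, ENNReal.ofReal (lapR b x ^ 2 * ‖u x‖ ^ 2)) := by
        simp only [ENNReal.ofReal_mul (show 0 ≤ 3 * h ^ 2 by positivity)]
        rw [lintegral_const_mul' _ _ ENNReal.ofReal_ne_top,
          lintegral_ofReal_add (by fun_prop) (fun x => by positivity) (fun x => by positivity),
          lintegral_ofReal_add (by fun_prop) (fun x => by positivity) (fun x => by positivity)]
    _ ≤ ENNReal.ofReal (3 * h ^ 2) *
        ((∫⁻ x, ENNReal.ofReal (energyWeight κ (pdR 0 b) x * ‖u x‖ ^ 2))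
        + (∫⁻ x, ENNReal.ofReal (energyWeight κ (pdR 1 b) x * ‖u x‖ ^ 2))
        + ∫⁻ x, ENNReal.ofReal (lapR b x ^ 2 * ‖u x‖ ^ 2)) := by
        have henergy_le (j : Fin 2) := lintegral_sq_mul_norm_opAh_sq_add_norm_opBh_sq_le hφ hκ0 hκ
          hh hu hPu (contDiff_pdR j hb) (hasCompactSupport_pdR j hb_supp)
        exact mul_le_mul_right (add_le_add_left (add_le_add (henergy_le 0) (henergy_le 1)) _) _
    _ = _ := by rw [lintegral_cutoffWeight_mul hκ0 hb hu.continuous]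

end Schrodinger

section Lattice

lemma card_Icc_ceil_sub_floor_add_le (t R : ℝ) :
    (Finset.Icc ⌈t - R⌉ ⌊t + R⌋).card ≤ ⌊2 * R + 1⌋.toNat := by
  rw [Int.card_Icc]
  refine Int.toNat_le_toNat (Int.le_floor.2 ?_)
  push_cast
  linarith [Int.floor_le (t + R), Int.le_ceil (t - R)]

lemma exists_finset_card_le_forall_norm_sub_intPt_le (R : ℝ) :
    ∃ N : ℕ, ∀ x, ∃ S : Finset (ℤ × ℤ), S.card ≤ N ∧ ∀ q, ‖x - intPt q‖ ≤ R → q ∈ S := by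
  refine ⟨⌊2 * R + 1⌋.toNat * ⌊2 * R + 1⌋.toNat, fun x =>
    ⟨Finset.Icc ⌈x 0 - R⌉ ⌊x 0 + R⌋ ×ˢ Finset.Icc ⌈x 1 - R⌉ ⌊x 1 + R⌋, ?_, fun q hq => ?_⟩⟩
  · rw [Finset.card_product]
    exact Nat.mul_le_mul (card_Icc_ceil_sub_floor_add_le _ _) (card_Icc_ceil_sub_floor_add_le _ _)
  · have h0 : |x 0 - q.1| ≤ R := by
      simpa [intPt] using (PiLp.norm_apply_le (x - intPt q) 0).trans hq
    have h1 : |x 1 - q.2| ≤ R := by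
      simpa [intPt] using (PiLp.norm_apply_le (x - intPt q) 1).trans hq
    rw [abs_le] at h0 h1
    simp only [Finset.mem_product, Finset.mem_Icc, Int.ceil_le, Int.le_floor]
    refine ⟨⟨?_, ?_⟩, ?_, ?_⟩ <;> linarith

lemma exists_tsum_ofReal_comp_sub_intPt_le {W : R2 → ℝ} (hW : Continuous W)
    (hW_supp : HasCompactSupport W) :
    ∃ K > 0, ∀ x, ∑' q, ENNReal.ofReal (W (x - intPt q)) ≤ ENNReal.ofReal K := by
  obtain ⟨M, hM⟩ := hW_supp.exists_bound_of_continuous hW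
  obtain ⟨R, hR⟩ := hW_supp.isBounded.exists_norm_le
  obtain ⟨N, hN⟩ := exists_finset_card_le_forall_norm_sub_intPt_le R
  refine ⟨N * |M| + 1, by positivity, fun x => ?_⟩
  obtain ⟨S, hS_card, hS⟩ := hN x
  have hzero : ∀ q ∉ S, ENNReal.ofReal (W (x - intPt q)) = 0 := fun q hq => by
    rw [image_eq_zero_of_notMem_tsupport fun hmem => hq (hS q (hR _ hmem)), ENNReal.ofReal_zero]
  have hterm : ∀ q ∈ S, ENNReal.ofReal (W (x - intPt q)) ≤ ENNReal.ofReal |M| := fun q _ =>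
    ENNReal.ofReal_le_ofReal ((Real.le_norm_self _).trans ((hM _).trans (le_abs_self M)))
  calc ∑' q, ENNReal.ofReal (W (x - intPt q))
      = ∑ q ∈ S, ENNReal.ofReal (W (x - intPt q)) := tsum_eq_sum hzero
    _ ≤ S.card • ENNReal.ofReal |M| := Finset.sum_le_card_nsmul _ _ _ hterm
    _ ≤ N • ENNReal.ofReal |M| := nsmul_le_nsmul_left zero_le hS_card
    _ = ENNReal.ofReal (N * |M|) := by
        rw [nsmul_eq_mul, ENNReal.ofReal_mul N.cast_nonneg, ENNReal.ofReal_natCast]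
    _ ≤ ENNReal.ofReal (N * |M| + 1) :=
        ENNReal.ofReal_le_ofReal (le_add_of_nonneg_right zero_le_one)

end Lattice

theorem tsum_eLpNorm_opPh_ofReal_mul_sq_le {φ β : R2 → ℝ} {h κ K : ℝ} {u : R2 → ℂ}
    (hφ : ContDiff ℝ 2 φ) (hκ0 : 0 ≤ κ) (hκ : ∀ x, h ^ 2 / 4 * lapR (phih φ h) x ≤ κ)
    (hh : h ∈ Set.Ioc 0 1) (hβ : ContDiff ℝ 2 β) (hβ_supp : HasCompactSupport β)
    (hK : ∀ x, ∑' q, ENNReal.ofReal (cutoffWeight κ β (x - intPt q)) ≤ ENNReal.ofReal K)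
    (hu : ContDiff ℝ 2 u) (hPu : ∀ x, opPh φ h u x = 0) :
    ∑' q, eLpNorm (opPh φ h fun x => β (x - intPt q) * u x) 2 volume ^ 2
      ≤ ENNReal.ofReal (3 * h ^ 2) * (ENNReal.ofReal K * eLpNorm u 2 volume ^ 2) := by
  have hW : Continuous (cutoffWeight κ β) := continuous_cutoffWeight hβ
  have hlocal : ∀ q, eLpNorm (opPh φ h fun x => β (x - intPt q) * u x) 2 volume ^ 2
      ≤ ENNReal.ofReal (3 * h ^ 2) * ∫⁻ x, ENNReal.ofReal (cutoffWeight κ β (x - intPt q)) *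
        ENNReal.ofReal (‖u x‖ ^ 2) := fun q => by
    simp only [← cutoffWeight_comp_sub (b := β)]
    exact eLpNorm_opPh_ofReal_mul_sq_le hφ hκ0 hκ hh (hβ.comp (contDiff_id.sub contDiff_const))
      (hβ_supp.comp_homeomorph (Homeomorph.subRight (intPt q))) hu hPu
  calc ∑' q, eLpNorm (opPh φ h fun x => β (x - intPt q) * u x) 2 volume ^ 2
      ≤ ENNReal.ofReal (3 * h ^ 2) * ∑' q, ∫⁻ x, ENNReal.ofReal (cutoffWeight κ β (x - intPt q)) *
          ENNReal.ofReal (‖u x‖ ^ 2) := by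
        rw [← ENNReal.tsum_mul_left]
        exact ENNReal.tsum_le_tsum hlocal
    _ ≤ ENNReal.ofReal (3 * h ^ 2) * (ENNReal.ofReal K * eLpNorm u 2 volume ^ 2) := by
        rw [eLpNorm_two_sq u]
        gcongr
        exact tsum_lintegral_mul_le (fun q => by fun_prop)
          (hu.continuous.norm.pow 2).measurable.ennreal_ofReal hK

theorem stmt7_general (Λ : ℝ) (β : R2 → ℝ) (hβ : ContDiff ℝ 2 β) (hβ_supp : HasCompactSupport β) :
    ∃ C > 0, ∀ φ : R2 → ℝ, ContDiff ℝ 2 φ → (∀ x, lapR φ x ≤ Λ) →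
      ∀ h ∈ Set.Ioc (0 : ℝ) 1, ∀ u : R2 → ℂ, ContDiff ℝ 2 u → (∀ x, opPh φ h u x = 0) →
      (∑' q : ℤ × ℤ,
          (eLpNorm (opPh φ h (fun x => ((β (x - intPt q) : ℝ) : ℂ) * u x)) 2 volume) ^ 2)
            ^ (1/2 : ℝ) ≤
        ENNReal.ofReal (C * h) * eLpNorm u 2 volume := by
  obtain ⟨K, hK_pos, hK⟩ := exists_tsum_ofReal_comp_sub_intPt_le
    (continuous_cutoffWeight (κ := |Λ| / 4) hβ) (hasCompactSupport_cutoffWeight hβ_supp)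
  refine ⟨√(3 * K), by positivity, fun φ hφ hφ_lap h hh u hu hPu => ?_⟩
  have hh0 : 0 < h := hh.1
  calc (∑' q, eLpNorm (opPh φ h fun x => β (x - intPt q) * u x) 2 volume ^ 2) ^ (1 / 2 : ℝ)
      ≤ (ENNReal.ofReal (3 * h ^ 2) * (ENNReal.ofReal K * eLpNorm u 2 volume ^ 2))
          ^ (1 / 2 : ℝ) := by
        gcongr
        exact tsum_eLpNorm_opPh_ofReal_mul_sq_le hφ (by positivity)
          (sq_div_four_mul_lapR_phih_le hφ_lap hh) hh hβ hβ_supp hK hu hPu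
    _ = ((ENNReal.ofReal (√(3 * K) * h) * eLpNorm u 2 volume) ^ 2) ^ (1 / 2 : ℝ) := by
        rw [mul_pow, ← ENNReal.ofReal_pow (by positivity), mul_pow, Real.sq_sqrt (by positivity),
          ← mul_assoc, ← ENNReal.ofReal_mul (by positivity)]
        ring_nf
    _ = ENNReal.ofReal (√(3 * K) * h) * eLpNorm u 2 volume := by
        rw [← ENNReal.rpow_natCast, ← ENNReal.rpow_mul]
        norm_num

/-- For a cutoff `β ∈ C_c^∞` and solutions of `P u = 0`,
`(∑_{q ∈ ℤ²} ‖P(β_q u)‖_{L²}²)^{1/2} ≤ C h ‖u‖_{L²}`. -/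
theorem stmt7 (φ : R2 → ℝ) (hφ_smooth : ContDiff ℝ (⊤ : ℕ∞) φ)
    (hφ_bd : ∀ n : ℕ, 2 ≤ n → ∃ C : ℝ, ∀ x : R2, ‖iteratedFDeriv ℝ n φ x‖ ≤ C)
    (β : R2 → ℝ) (hβ_smooth : ContDiff ℝ (⊤ : ℕ∞) β) (hβ_supp : HasCompactSupport β) :
    ∃ C > 0, ∀ h ∈ Set.Ioc (0 : ℝ) 1, ∀ u : SchwartzMap R2 ℂ,
      (∀ x : R2, opPh φ h (⇑u) x = 0) →
      (∑' q : ℤ × ℤ,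
          (eLpNorm (opPh φ h (fun x => ((β (x - intPt q) : ℝ) : ℂ) * u x)) 2 volume) ^ 2)
            ^ (1/2 : ℝ) ≤
        ENNReal.ofReal (C * h) * eLpNorm (⇑u) 2 volume := by
  obtain ⟨Λ, hΛ⟩ := hφ_bd 2 le_rfl
  have hφ : ContDiff ℝ 2 φ := contDiff_infty.1 hφ_smooth 2
  obtain ⟨C, hC, hbound⟩ := stmt7_general (2 * Λ) β (contDiff_infty.1 hβ_smooth 2) hβ_supp
  exact ⟨C, hC, fun h hh u =>
    hbound φ hφ (lapR_le_of_norm_iteratedFDeriv_le hφ hΛ) h hh u (u.smooth 2)⟩
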